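/- For every ε > 0 there exists δ > 0 (which may be taken to be 2^{−O(1/ε)}) such that for every bipartite graph G with parts X and Y satisfying |X| = n and |Y| = 2n: if im(G) < (1 − ε)·n, then log₂ irr(G) < (1 − δ)·n. -/

import Mathlib

/-- A set of vertices is independent in `G` if it spans no edge. -/
def IsIndepSet {V : Type*} (G : SimpleGraph V) (s : Set V) : Prop :=
  ∀ ⦃x⦄, x ∈ s → ∀ ⦃y⦄, y ∈ s → ¬ G.Adj x y

/-- A maximal independent set. -/
def IsMaxIndepSet {V : Type*} (G : SimpleGraph V) (s : Set V) : Prop :=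
  IsIndepSet G s ∧ ∀ t, IsIndepSet G t → s ⊆ t → s = t

/-- `mis G` is the number of maximal independent sets of `G`. -/
noncomputable def mis {V : Type*} (G : SimpleGraph V) : ℕ :=
  Nat.card {s : Set V // IsMaxIndepSet G s}

/-- `S` induces a triangle matching: within `S`, every vertex has exactly two
neighbours, and these two neighbours are adjacent; so `G[S]` is a vertex-disjoint
union of triangles. -/
def IsInducedTriangleMatching {V : Type*} (G : SimpleGraph V) (S : Finset V) : Prop :=
  ∀ x ∈ S, ∃ y ∈ S, ∃ z ∈ S, G.Adj x y ∧ G.Adj x z ∧ G.Adj y z ∧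
    ∀ w ∈ S, G.Adj x w → w = y ∨ w = z

/-- `itm G`: the largest number of triangles in an induced triangle matching. -/
noncomputable def itm {V : Type*} (G : SimpleGraph V) : ℕ :=
  sSup {k | ∃ S : Finset V, S.card = 3 * k ∧ IsInducedTriangleMatching G S}

/-- `S` induces a matching: within `S`, every vertex has exactly one neighbour. -/
def IsInducedMatching {V : Type*} (G : SimpleGraph V) (S : Finset V) : Prop :=
  ∀ x ∈ S, ∃ y ∈ S, G.Adj x y ∧ ∀ z ∈ S, G.Adj x z → z = y

/-- `im G`: the largest number of edges in an induced matching. -/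
noncomputable def im {V : Type*} (G : SimpleGraph V) : ℕ :=
  sSup {k | ∃ S : Finset V, S.card = 2 * k ∧ IsInducedMatching G S}

/-- The neighbourhood of a set of vertices. -/
def nbhd {V : Type*} (G : SimpleGraph V) (S : Set V) : Set V :=
  {y | ∃ x ∈ S, G.Adj x y}

/-- A set `J` is irredundant if no member's neighbourhood is covered by the
neighbourhoods of the other members. -/
def Irredundant {V : Type*} (G : SimpleGraph V) (J : Set V) : Prop :=
  ∀ x ∈ J, ¬ (G.neighborSet x ⊆ nbhd G (J \ {x}))

/-- `irr G X`: the number of irredundant subsets of `X`. -/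
noncomputable def irr {V : Type*} (G : SimpleGraph V) (X : Set V) : ℕ :=
  Nat.card {J : Set V // J ⊆ X ∧ Irredundant G J}

/-!
Call a neighbour of `x ∈ J` private if it is adjacent to no other member of `J`. A subset of `X` is
irredundant iff all its members have private neighbours, and matching each member to a private
neighbour shows that its size is at most `im G`.

If all degrees from `X` are below `M`, then every `w ∈ X` without a private neighbour with respect
to `X` yields a block of at most `M` vertices that no irredundant set contains: `w` together with
one further neighbour of each neighbour of `w`. Choosing the further neighbours by a cyclic
permutation of each neighbourhood keeps every vertex in at most `M` blocks, so at least a fraction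
`M⁻²` of the blocks is pairwise disjoint, and each of those costs a factor `1 - 2⁻ᴹ`. There are at
least `|X| - im G` blocks.

A vertex of degree at least `M` is branched upon: putting it into the irredundant set makes `M`
vertices of `Y` useless as private neighbours, so such branches are affordable when `M` is a large
multiple of `|Y| / (ε |X|)`.
-/

open Finset Real

section Counting

variable {ι α β : Type*}

open Classical in
/-- The subsets of `X` that contain none of the blocks `B w` with `w ∈ W`. -/
noncomputable def blockFreeSubsets (B : ι → Finset α) (X : Finset α) (W : Finset ι) :
    Finset (Finset α) :=
  {J ∈ X.powerset | ∀ w ∈ W, ¬ B w ⊆ J}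

/-- The exponential rate at which each block of at most `k` points, every point lying in at most `d`
blocks, thins out the block-free sets: a block meets at most `k * d` blocks, and avoiding it costs a
factor `1 - 2⁻ᵏ`. It is `0` when `k * d = 0`. -/
noncomputable def blockRate (k d : ℕ) : ℝ := (2 : ℝ)⁻¹ ^ k / (k * d : ℕ)

lemma blockRate_nonneg (k d : ℕ) : 0 ≤ blockRate k d := by
  unfold blockRate
  positivity

lemma blockRate_mul_le {k d c : ℕ} (hc : c ≤ k * d) : blockRate k d * c ≤ (2 : ℝ)⁻¹ ^ k := by
  have hc' : (c : ℝ) / (k * d : ℕ) ≤ 1 := div_le_one_of_le₀ (by exact_mod_cast hc) (by positivity)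
  calc blockRate k d * c = (2 : ℝ)⁻¹ ^ k * (c / (k * d : ℕ)) := by
        unfold blockRate
        ring
    _ ≤ (2 : ℝ)⁻¹ ^ k := mul_le_of_le_one_right (by positivity) hc'

lemma two_pow_sub_one_le_two_pow_mul_exp {b k : ℕ} (hbk : b ≤ k) {t : ℝ}
    (ht : t ≤ (2 : ℝ)⁻¹ ^ k) : ((2 ^ b - 1 : ℕ) : ℝ) ≤ 2 ^ b * exp (-t) := by
  have hpow : (2 : ℝ)⁻¹ ^ k ≤ (2 : ℝ)⁻¹ ^ b :=
    pow_le_pow_of_le_one (by norm_num) (by norm_num) hbk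
  calc ((2 ^ b - 1 : ℕ) : ℝ) = 2 ^ b * (1 - (2 : ℝ)⁻¹ ^ b) := by
        rw [Nat.cast_sub Nat.one_le_two_pow, mul_sub, ← mul_pow]
        norm_num
    _ ≤ 2 ^ b * exp (-t) := by
        gcongr
        linarith [one_sub_le_exp_neg t]

section BlockFree

variable {B : ι → Finset α} {X : Finset α} {W : Finset ι} {k d : ℕ}

lemma mem_blockFreeSubsets {J : Finset α} :
    J ∈ blockFreeSubsets B X W ↔ J ⊆ X ∧ ∀ w ∈ W, ¬ B w ⊆ J := by
  simp [blockFreeSubsets]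

open Classical in
lemma card_blockFreeSubsets_le_mul {W' : Finset ι} {x : ι} (hx : x ∈ W) (hW' : W' ⊆ W) :
    #(blockFreeSubsets B X W) ≤ (2 ^ #(B x) - 1) * #(blockFreeSubsets B (X \ B x) W') := by
  have hproper : #(B x).ssubsets = 2 ^ #(B x) - 1 := by
    rw [ssubsets, card_erase_of_mem (mem_powerset_self _), card_powerset]
  rw [← hproper, ← card_product]
  refine card_le_card_of_injOn (fun J => (J ∩ B x, J \ B x)) (fun J hJ => ?_)
    (fun J _ J' _ hJJ' => ?_)
  · obtain ⟨hJX, hfree⟩ := mem_blockFreeSubsets.mp hJ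
    refine mem_product.mpr ⟨mem_ssubsets.mpr ?_, mem_blockFreeSubsets.mpr ⟨?_, ?_⟩⟩
    · exact inter_subset_right.ssubset_of_ne fun h => hfree x hx (inter_eq_right.mp h)
    · exact sdiff_subset_sdiff hJX Subset.rfl
    · exact fun w hw hsub => hfree w (hW' hw) (hsub.trans sdiff_subset)
  · rw [Prod.mk.injEq] at hJJ'
    rw [← sdiff_union_inter J (B x), ← sdiff_union_inter J' (B x), hJJ'.1, hJJ'.2]

open Classical in
lemma card_filter_not_disjoint_le {A : Finset α} (hA : #A ≤ k)
    (hdeg : ∀ p ∈ A, #{w ∈ W | p ∈ B w} ≤ d) : #{w ∈ W | ¬ Disjoint (B w) A} ≤ k * d := by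
  have hcover : {w ∈ W | ¬ Disjoint (B w) A} ⊆ A.biUnion fun p => {w ∈ W | p ∈ B w} := by
    intro w hw
    simp only [mem_filter, not_disjoint_iff, mem_biUnion] at hw ⊢
    obtain ⟨hwW, p, hpw, hpA⟩ := hw
    exact ⟨p, hpA, hwW, hpw⟩
  calc #{w ∈ W | ¬ Disjoint (B w) A} ≤ #(A.biUnion fun p => {w ∈ W | p ∈ B w}) :=
        card_le_card hcover
    _ ≤ #A * d := card_biUnion_le_card_mul _ _ _ hdeg
    _ ≤ k * d := Nat.mul_le_mul_right d hA

open Classical in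
theorem card_blockFreeSubsets_le (hne : ∀ w ∈ W, (B w).Nonempty) (hsub : ∀ w ∈ W, B w ⊆ X)
    (hcard : ∀ w ∈ W, #(B w) ≤ k) (hdeg : ∀ p ∈ X, #{w ∈ W | p ∈ B w} ≤ d) :
    (#(blockFreeSubsets B X W) : ℝ) ≤ 2 ^ #X * exp (-(blockRate k d * #W)) := by
  induction W using Finset.strongInduction generalizing X with
  | H W ih =>
  rcases W.eq_empty_or_nonempty with rfl | ⟨x, hx⟩
  · simp [blockFreeSubsets]
  set D := {w ∈ W | ¬ Disjoint (B w) (B x)} with hD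
  set W' := {w ∈ W | Disjoint (B w) (B x)} with hW'
  have hW'W : W' ⊆ W := filter_subset _ _
  have hDle : #D ≤ k * d :=
    card_filter_not_disjoint_le (hcard x hx) fun p hp => hdeg p (hsub x hx hp)
  have hW'ssub : W' ⊂ W :=
    filter_ssubset.mpr ⟨x, hx, fun h => (hne x hx).ne_empty (disjoint_self_iff_empty _ |>.mp h)⟩
  have hrest : (#(blockFreeSubsets B (X \ B x) W') : ℝ)
      ≤ 2 ^ #(X \ B x) * exp (-(blockRate k d * #W')) :=
    ih W' hW'ssub (fun w hw => hne w (hW'W hw))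
      (fun w hw => subset_sdiff.mpr ⟨hsub w (hW'W hw), (mem_filter.mp hw).2⟩)
      (fun w hw => hcard w (hW'W hw))
      (fun p hp => (card_le_card (filter_subset_filter _ hW'W)).trans (hdeg p (sdiff_subset hp)))
  have hX : #X = #(B x) + #(X \ B x) := by
    rw [add_comm, card_sdiff_add_card_eq_card (hsub x hx)]
  have hW : #W = #D + #W' := by
    rw [add_comm, hD, hW', card_filter_add_card_filter_not]
  calc (#(blockFreeSubsets B X W) : ℝ)
      ≤ (2 ^ #(B x) - 1 : ℕ) * #(blockFreeSubsets B (X \ B x) W') := by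
        exact_mod_cast card_blockFreeSubsets_le_mul (B := B) (X := X) hx hW'W
    _ ≤ (2 ^ #(B x) * exp (-(blockRate k d * #D)))
          * (2 ^ #(X \ B x) * exp (-(blockRate k d * #W'))) := by
        gcongr
        exact two_pow_sub_one_le_two_pow_mul_exp (hcard x hx) (blockRate_mul_le hDle)
    _ = 2 ^ #X * exp (-(blockRate k d * #W)) := by
        rw [mul_mul_mul_comm, ← pow_add, ← exp_add, ← hX, hW]
        push_cast
        ring_nf

end BlockFree

section Irredundant

/-- `x` has a neighbour in `Y` under `r` that is adjacent to no other member of `J`. -/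
def HasPrivateNeighbor (r : α → β → Prop) (Y : Finset β) (J : Finset α) (x : α) : Prop :=
  ∃ y ∈ Y, r x y ∧ ∀ z ∈ J, r z y → z = x

open Classical in
/-- The irredundant subsets of `X`, for the bipartite graph between `X` and `Y` given by `r`. -/
noncomputable def irredundantSubsets (r : α → β → Prop) (X : Finset α) (Y : Finset β) :
    Finset (Finset α) :=
  {J ∈ X.powerset | ∀ x ∈ J, HasPrivateNeighbor r Y J x}

variable {r : α → β → Prop} {X X' J : Finset α} {Y Y' : Finset β} {x : α}

lemma HasPrivateNeighbor.mono {J' : Finset α} (h : HasPrivateNeighbor r Y J x) (hJ : J' ⊆ J)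
    (hY : Y ⊆ Y') : HasPrivateNeighbor r Y' J' x :=
  let ⟨y, hy, hxy, hpriv⟩ := h
  ⟨y, hY hy, hxy, fun z hz => hpriv z (hJ hz)⟩

lemma mem_irredundantSubsets :
    J ∈ irredundantSubsets r X Y ↔ J ⊆ X ∧ ∀ x ∈ J, HasPrivateNeighbor r Y J x := by
  simp [irredundantSubsets]

lemma empty_mem_irredundantSubsets : ∅ ∈ irredundantSubsets r X Y := by
  simp [mem_irredundantSubsets]

lemma irredundantSubsets_mono (hX : X ⊆ X') (hY : Y ⊆ Y') :
    irredundantSubsets r X Y ⊆ irredundantSubsets r X' Y' := by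
  intro J hJ
  rw [mem_irredundantSubsets] at hJ ⊢
  exact ⟨hJ.1.trans hX, fun x hx => (hJ.2 x hx).mono Subset.rfl hY⟩

open Classical in
lemma filter_hasPrivateNeighbor_mem_irredundantSubsets :
    {x ∈ X | HasPrivateNeighbor r Y X x} ∈ irredundantSubsets r X Y :=
  mem_irredundantSubsets.mpr ⟨filter_subset _ _, fun _ hx =>
    (mem_filter.mp hx).2.mono (filter_subset _ _) Subset.rfl⟩

open Classical in
lemma erase_mem_irredundantSubsets (hJ : J ∈ irredundantSubsets r X Y) (hx : x ∈ J) :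
    J.erase x ∈ irredundantSubsets r (X.erase x) {y ∈ Y | ¬ r x y} := by
  obtain ⟨hJX, hpriv⟩ := mem_irredundantSubsets.mp hJ
  refine mem_irredundantSubsets.mpr ⟨erase_subset_erase x hJX, fun w hw => ?_⟩
  obtain ⟨hwx, hwJ⟩ := mem_erase.mp hw
  obtain ⟨y, hy, hwy, hunique⟩ := hpriv w hwJ
  exact ⟨y, mem_filter.mpr ⟨hy, fun hxy => hwx (hunique x hx hxy).symm⟩, hwy,
    fun z hz => hunique z (mem_of_mem_erase hz)⟩

open Classical in
lemma card_irredundantSubsets_le_add (x : α) :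
    #(irredundantSubsets r X Y) ≤ #(irredundantSubsets r (X.erase x) {y ∈ Y | ¬ r x y})
      + #(irredundantSubsets r (X.erase x) Y) := by
  rw [← card_filter_add_card_filter_not (s := irredundantSubsets r X Y) (fun J => x ∈ J)]
  refine Nat.add_le_add (card_le_card_of_injOn (fun J => J.erase x) ?_ ?_) (card_le_card ?_)
  · intro J hJ
    obtain ⟨hJ, hxJ⟩ := mem_filter.mp hJ
    exact erase_mem_irredundantSubsets hJ hxJ
  · exact (erase_injOn' x).mono fun J hJ => (mem_filter.mp hJ).2
  · intro J hJ
    obtain ⟨hJ, hxJ⟩ := mem_filter.mp hJ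
    rw [mem_irredundantSubsets] at hJ ⊢
    exact ⟨subset_erase.mpr ⟨hJ.1, hxJ⟩, hJ.2⟩

section PrivacyBlock

open Classical in
/-- The vertex `x` together with its images under the permutations `σ y` attached to its
neighbours `y ∈ Y`. When `σ y` permutes the neighbourhood of `y` without fixed points, a set
containing this block leaves `x` without a private neighbour. -/
noncomputable def privacyBlock (r : α → β → Prop) (Y : Finset β) (σ : β → Equiv.Perm α) (x : α) :
    Finset α :=
  insert x (image (fun y => σ y x) {y ∈ Y | r x y})

variable {σ : β → Equiv.Perm α}

lemma mem_privacyBlock {p : α} :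
    p ∈ privacyBlock r Y σ x ↔ p = x ∨ ∃ y ∈ Y, r x y ∧ σ y x = p := by
  simp [privacyBlock, and_assoc]

lemma self_mem_privacyBlock : x ∈ privacyBlock r Y σ x := mem_privacyBlock.mpr (.inl rfl)

open Classical in
lemma card_privacyBlock_le : #(privacyBlock r Y σ x) ≤ #{y ∈ Y | r x y} + 1 :=
  (card_insert_le _ _).trans (Nat.add_le_add_right card_image_le 1)

lemma privacyBlock_subset (hσ : ∀ y, (σ y).IsCycleOn {x | x ∈ X ∧ r x y}) (hx : x ∈ X) :
    privacyBlock r Y σ x ⊆ X := by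
  intro p hp
  rcases mem_privacyBlock.mp hp with rfl | ⟨y, -, hxy, rfl⟩
  · exact hx
  · exact ((hσ y).apply_mem_iff.mpr ⟨hx, hxy⟩).1

open Classical in
lemma card_filter_mem_privacyBlock_le (hσ : ∀ y, (σ y).IsCycleOn {x | x ∈ X ∧ r x y}) (p : α) :
    #{w ∈ X | p ∈ privacyBlock r Y σ w} ≤ #{y ∈ Y | r p y} + 1 := by
  have hsub : {w ∈ X | p ∈ privacyBlock r Y σ w} ⊆
      privacyBlock r Y (fun y => (σ y).symm) p := by
    intro w hw
    obtain ⟨hwX, hpw⟩ := mem_filter.mp hw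
    rcases mem_privacyBlock.mp hpw with rfl | ⟨y, hy, hwy, rfl⟩
    · exact self_mem_privacyBlock
    · exact mem_privacyBlock.mpr (.inr ⟨y, hy, ((hσ y).apply_mem_iff.mpr ⟨hwX, hwy⟩).2, by simp⟩)
  exact (card_le_card hsub).trans card_privacyBlock_le

lemma not_privacyBlock_subset (hσ : ∀ y, (σ y).IsCycleOn {x | x ∈ X ∧ r x y}) (hxX : x ∈ X)
    (hx : ¬ HasPrivateNeighbor r Y X x) (hJ : J ∈ irredundantSubsets r X Y) :
    ¬ privacyBlock r Y σ x ⊆ J := by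
  intro hblock
  obtain ⟨y, hy, hxy, hunique⟩ :=
    (mem_irredundantSubsets.mp hJ).2 x (hblock self_mem_privacyBlock)
  obtain ⟨z, hzX, hzy, hzx⟩ : ∃ z ∈ X, r z y ∧ z ≠ x := by
    by_contra! h
    exact hx ⟨y, hy, hxy, h⟩
  have hmoved : σ y x ≠ x := (hσ y).apply_ne ⟨x, ⟨hxX, hxy⟩, z, ⟨hzX, hzy⟩, hzx.symm⟩ ⟨hxX, hxy⟩
  exact hmoved (hunique _ (hblock (mem_privacyBlock.mpr (.inr ⟨y, hy, hxy, rfl⟩)))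
    ((hσ y).apply_mem_iff.mpr ⟨hxX, hxy⟩).2)

end PrivacyBlock

open Classical in
theorem card_irredundantSubsets_le_of_degree_lt {M : ℕ} (hdeg : ∀ x ∈ X, #{y ∈ Y | r x y} < M) :
    (#(irredundantSubsets r X Y) : ℝ)
      ≤ 2 ^ #X * exp (-(blockRate M M * #{x ∈ X | ¬ HasPrivateNeighbor r Y X x})) := by
  have hcycle (y : β) : ∃ f : Equiv.Perm α, f.IsCycleOn {x | x ∈ X ∧ r x y} :=
    have hfin : {x | x ∈ X ∧ r x y}.Finite := X.finite_toSet.subset fun _ hx => hx.1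
    hfin.countable.exists_cycleOn.imp fun _ hf => hf.1
  choose σ hσ using hcycle
  set W := {x ∈ X | ¬ HasPrivateNeighbor r Y X x}
  have hWX : W ⊆ X := filter_subset _ _
  have hsub : irredundantSubsets r X Y ⊆ blockFreeSubsets (privacyBlock r Y σ) X W :=
    fun J hJ => mem_blockFreeSubsets.mpr ⟨(mem_irredundantSubsets.mp hJ).1, fun w hw =>
      not_privacyBlock_subset hσ (hWX hw) (mem_filter.mp hw).2 hJ⟩
  calc (#(irredundantSubsets r X Y) : ℝ) ≤ #(blockFreeSubsets (privacyBlock r Y σ) X W) := by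
        exact_mod_cast card_le_card hsub
    _ ≤ 2 ^ #X * exp (-(blockRate M M * #W)) :=
        card_blockFreeSubsets_le (fun w _ => ⟨w, self_mem_privacyBlock⟩)
          (fun w hw => privacyBlock_subset hσ (hWX hw))
          (fun w hw => card_privacyBlock_le.trans (hdeg w (hWX hw)))
          (fun p hp => (card_le_card (filter_subset_filter _ hWX)).trans
            ((card_filter_mem_privacyBlock_le hσ p).trans (hdeg p hp)))

lemma blockRate_le_quarter {M : ℕ} (hM : 2 ≤ M) : blockRate M M ≤ 1 / 4 := by
  have hsq : (4 : ℝ) ≤ (M * M : ℕ) := by exact_mod_cast Nat.mul_le_mul hM hM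
  exact div_le_div₀ zero_le_one (pow_le_one₀ (by norm_num) (by norm_num)) (by norm_num) hsq

lemma one_add_exp_neg_four_mul_le {s : ℝ} (hs₀ : 0 ≤ s) (hs : s ≤ 1 / 4) :
    1 + exp (-(4 * s)) ≤ 2 * exp (-s) := by
  have hpow : exp (-(4 * s)) = exp (-s) ^ 4 := by
    rw [← exp_nat_mul]
    ring_nf
  have hle : exp (-s) ≤ 1 := exp_le_one_iff.mpr (by linarith)
  have hge : 3 / 4 ≤ exp (-s) := by linarith [one_sub_le_exp_neg s]
  rw [hpow]
  generalize exp (-s) = u at hle hge ⊢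
  have hcubic : 0 ≤ u ^ 3 + u ^ 2 + u - 1 := by nlinarith [pow_nonneg (by linarith : 0 ≤ u) 3]
  linear_combination mul_nonneg (sub_nonneg.mpr hle) hcubic

open Classical in
lemma card_irredundantSubsets_le_of_degree_lt_of_card_le {M m : ℕ}
    (hdeg : ∀ x ∈ X, #{y ∈ Y | r x y} < M) (hm : ∀ L ∈ irredundantSubsets r X Y, #L ≤ m) :
    (#(irredundantSubsets r X Y) : ℝ) ≤ 2 ^ #X * exp (blockRate M M * (m - #X)) := by
  have hprivate : #{x ∈ X | HasPrivateNeighbor r Y X x} ≤ m :=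
    hm _ filter_hasPrivateNeighbor_mem_irredundantSubsets
  have hsplit : #{x ∈ X | HasPrivateNeighbor r Y X x} + #{x ∈ X | ¬ HasPrivateNeighbor r Y X x}
      = #X := card_filter_add_card_filter_not _
  have hmissing : (#X : ℝ) ≤ m + #{x ∈ X | ¬ HasPrivateNeighbor r Y X x} := by
    exact_mod_cast (by omega : #X ≤ m + #{x ∈ X | ¬ HasPrivateNeighbor r Y X x})
  refine (card_irredundantSubsets_le_of_degree_lt hdeg).trans ?_
  rw [← mul_neg]
  gcongr
  · exact blockRate_nonneg M M
  · linarith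

lemma two_pow_mul_exp_add_le {s : ℝ} (hs₀ : 0 ≤ s) (hs : s ≤ 1 / 4) (n : ℕ) (t : ℝ) :
    2 ^ n * exp (t - 4 * s) + 2 ^ n * exp t ≤ 2 ^ (n + 1) * exp (t - s) := by
  calc 2 ^ n * exp (t - 4 * s) + 2 ^ n * exp t = 2 ^ n * exp t * (1 + exp (-(4 * s))) := by
        rw [sub_eq_add_neg, exp_add]
        ring
    _ ≤ 2 ^ n * exp t * (2 * exp (-s)) := by
        gcongr
        exact one_add_exp_neg_four_mul_le hs₀ hs
    _ = 2 ^ (n + 1) * exp (t - s) := by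
        rw [sub_eq_add_neg, exp_add]
        ring

open Classical in
lemma div_mul_card_filter_not_add_le {c : ℝ} (hc : 0 ≤ c) {M : ℕ} (hM : 0 < M) {p : β → Prop}
    (hp : M ≤ #{y ∈ Y | p y}) : c / M * #{y ∈ Y | ¬ p y} + c ≤ c / M * #Y := by
  have hsplit : #{y ∈ Y | p y} + #{y ∈ Y | ¬ p y} = #Y := card_filter_add_card_filter_not _
  have hsum : (#{y ∈ Y | ¬ p y} : ℝ) + M ≤ #Y := by
    exact_mod_cast (by omega : #{y ∈ Y | ¬ p y} + M ≤ #Y)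
  calc c / M * #{y ∈ Y | ¬ p y} + c = c / M * (#{y ∈ Y | ¬ p y} + M) := by field_simp
    _ ≤ c / M * #Y := by gcongr

/-- The potential `4 / M` of each vertex of `Y` pays for branching on vertices of degree at least
`M`, because `1 + exp (-4s) ≤ 2 exp (-s)` at `s = blockRate M M`. -/
theorem card_irredundantSubsets_le {M m : ℕ} (hM : 2 ≤ M)
    (hm : ∀ L ∈ irredundantSubsets r X Y, #L ≤ m) :
    (#(irredundantSubsets r X Y) : ℝ)
      ≤ 2 ^ #X * exp (blockRate M M * (m + 4 / M * #Y - #X)) := by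
  classical
  have hrate : 0 ≤ blockRate M M := blockRate_nonneg M M
  induction X using Finset.strongInduction generalizing Y with
  | H X ih =>
  by_cases hdeg : ∀ x ∈ X, #{y ∈ Y | r x y} < M
  · refine (card_irredundantSubsets_le_of_degree_lt_of_card_le hdeg hm).trans ?_
    gcongr
    exact le_add_of_nonneg_right (by positivity)
  push Not at hdeg
  obtain ⟨x, hx, hxM⟩ := hdeg
  set Y' := {y ∈ Y | ¬ r x y}
  set t := blockRate M M * (m + 4 / M * #Y - #(X.erase x))
  have hbound {Z : Finset β} (hZ : Z ⊆ Y) : (#(irredundantSubsets r (X.erase x) Z) : ℝ)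
      ≤ 2 ^ #(X.erase x) * exp (blockRate M M * (m + 4 / M * #Z - #(X.erase x))) :=
    ih _ (erase_ssubset hx) fun L hL => hm L (irredundantSubsets_mono (erase_subset x X) hZ hL)
  have hpotential : 4 / (M : ℝ) * #Y' + 4 ≤ 4 / M * #Y :=
    div_mul_card_filter_not_add_le zero_le_four (by omega) hxM
  have hselected : blockRate M M * (m + 4 / M * #Y' - #(X.erase x)) ≤ t - 4 * blockRate M M := by
    nlinarith
  have hX : #X = #(X.erase x) + 1 := (card_erase_add_one hx).symm
  calc (#(irredundantSubsets r X Y) : ℝ)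
      ≤ #(irredundantSubsets r (X.erase x) Y') + #(irredundantSubsets r (X.erase x) Y) := by
        exact_mod_cast card_irredundantSubsets_le_add (r := r) (X := X) (Y := Y) x
    _ ≤ 2 ^ #(X.erase x) * exp (t - 4 * blockRate M M) + 2 ^ #(X.erase x) * exp t := by
        refine add_le_add ((hbound (filter_subset _ _)).trans ?_) (hbound Subset.rfl)
        gcongr
    _ ≤ 2 ^ (#(X.erase x) + 1) * exp (t - blockRate M M) :=
        two_pow_mul_exp_add_le hrate (blockRate_le_quarter hM) _ t
    _ = 2 ^ #X * exp (blockRate M M * (m + 4 / M * #Y - #X)) := by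
        simp only [hX, t]
        push_cast
        ring_nf

end Irredundant

end Counting

section Graph

variable {V : Type*} {G : SimpleGraph V} {X Y J : Finset V}

lemma irredundant_coe_iff (hG : G.IsBipartiteWith X Y) (hJ : J ⊆ X) :
    Irredundant G J ↔ ∀ x ∈ J, HasPrivateNeighbor G.Adj Y J x := by
  refine forall₂_congr fun x hx => Set.not_subset.trans ⟨?_, ?_⟩
  · rintro ⟨y, hxy, hy⟩
    refine ⟨y, hG.mem_of_mem_adj (hJ hx) hxy, hxy, fun z hz hzy => ?_⟩
    by_contra hzx
    exact hy ⟨z, ⟨hz, hzx⟩, hzy⟩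
  · rintro ⟨y, -, hxy, hunique⟩
    exact ⟨y, hxy, fun ⟨z, hz, hzy⟩ => hz.2 (hunique z hz.1 hzy)⟩

lemma irr_eq_card_irredundantSubsets (hG : G.IsBipartiteWith X Y) :
    irr G X = #(irredundantSubsets G.Adj X Y) := by
  have himage : {J : Set V | J ⊆ X ∧ Irredundant G J}
      = (fun J : Finset V => (J : Set V)) '' irredundantSubsets G.Adj X Y := by
    ext J
    constructor
    · rintro ⟨hJX, hJ⟩
      lift J to Finset V using X.finite_toSet.subset hJX
      rw [coe_subset] at hJX
      exact ⟨J, mem_irredundantSubsets.mpr ⟨hJX, (irredundant_coe_iff hG hJX).mp hJ⟩, rfl⟩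
    · rintro ⟨J, hJ, rfl⟩
      obtain ⟨hJX, hJ⟩ := mem_irredundantSubsets.mp hJ
      exact ⟨coe_subset.mpr hJX, (irredundant_coe_iff hG hJX).mpr hJ⟩
  calc irr G X = {J : Set V | J ⊆ X ∧ Irredundant G J}.ncard := rfl
    _ = #(irredundantSubsets G.Adj X Y) := by
      rw [himage, Set.ncard_image_of_injective _ coe_injective, Set.ncard_coe_finset]

open Classical in
lemma isInducedMatching_union_image (hG : G.IsBipartiteWith X Y) (hJ : J ⊆ X) {f : V → V}
    (hadj : ∀ x ∈ J, G.Adj x (f x)) (hunique : ∀ x ∈ J, ∀ z ∈ J, G.Adj z (f x) → z = x) :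
    IsInducedMatching G (J ∪ J.image f) := by
  have hX {v : V} (hv : v ∈ J) : v ∈ (X : Set V) := hJ hv
  have hY {v : V} (hv : v ∈ J) : f v ∈ (Y : Set V) := hG.mem_of_mem_adj (hX hv) (hadj v hv)
  intro v hv
  simp only [mem_union, mem_image] at hv ⊢
  rcases hv with hv | ⟨x, hx, rfl⟩
  · refine ⟨f v, .inr ⟨v, hv, rfl⟩, hadj v hv, ?_⟩
    rintro z (hz | ⟨w, hw, rfl⟩) hvz
    · exact absurd (hG.mem_of_mem_adj (hX hv) hvz) (Set.disjoint_left.mp hG.disjoint (hX hz))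
    · rw [hunique w hw v hv hvz]
  · refine ⟨x, .inl hx, (hadj x hx).symm, ?_⟩
    rintro z (hz | ⟨w, hw, rfl⟩) hxz
    · exact hunique x hx z hz hxz.symm
    · exact absurd (hY hw) (Set.disjoint_left.mp hG.disjoint (hG.symm.mem_of_mem_adj (hY hx) hxz))

lemma IsInducedMatching.card_le (hG : G.IsBipartiteWith X Y) {S : Finset V}
    (hS : IsInducedMatching G S) : #S ≤ #X + #Y := by
  classical
  have hsub : S ⊆ X ∪ Y := by
    intro x hx
    obtain ⟨y, -, hxy, -⟩ := hS x hx
    rcases hG.mem_of_adj hxy with h | h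
    · exact mem_union_left Y h.1
    · exact mem_union_right X h.1
  exact (card_le_card hsub).trans (card_union_le X Y)

lemma IsInducedMatching.le_im (hG : G.IsBipartiteWith X Y) {S : Finset V} {k : ℕ}
    (hS : IsInducedMatching G S) (hk : #S = 2 * k) : k ≤ im G := by
  refine le_csSup ⟨#X + #Y, ?_⟩ ⟨S, hk, hS⟩
  rintro l ⟨T, hl, hT⟩
  have := hT.card_le hG
  omega

lemma card_le_im_of_mem_irredundantSubsets (hG : G.IsBipartiteWith X Y)
    (hJ : J ∈ irredundantSubsets G.Adj X Y) : #J ≤ im G := by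
  classical
  obtain ⟨hJX, hpriv⟩ := mem_irredundantSubsets.mp hJ
  choose! f hfY hadj hunique using hpriv
  have hinj : Set.InjOn f J := fun a ha b hb hab => hunique b hb a ha (hab ▸ hadj a ha)
  have hdisj : Disjoint J (J.image f) :=
    (disjoint_coe.mp hG.disjoint).mono hJX (image_subset_iff.mpr hfY)
  refine (isInducedMatching_union_image hG hJX hadj hunique).le_im hG ?_
  rw [card_union_of_disjoint hdisj, card_image_of_injOn hinj, two_mul]

lemma logb_two_le_add_of_le {a t : ℝ} {n : ℕ} (ha : 0 < a) (ht : t ≤ 0)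
    (h : a ≤ 2 ^ n * exp t) : logb 2 a ≤ n + t := by
  have hlog_pos : 0 < log 2 := log_pos one_lt_two
  have hlog_le : log 2 ≤ 1 := by linarith [log_two_lt_d9]
  rw [logb, div_le_iff₀ hlog_pos]
  calc log a ≤ log (2 ^ n * exp t) := log_le_log ha h
    _ = n * log 2 + t := by rw [log_mul (by positivity) (exp_ne_zero t), log_pow, log_exp]
    _ ≤ (n + t) * log 2 := by nlinarith

theorem logb_irr_le (hG : G.IsBipartiteWith X Y) {M : ℕ} (hM : 2 ≤ M)
    (him : im G + 4 / (M : ℝ) * #Y ≤ #X) :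
    logb 2 (irr G X) ≤ #X + blockRate M M * (im G + 4 / M * #Y - #X) := by
  rw [irr_eq_card_irredundantSubsets hG]
  refine logb_two_le_add_of_le ?_ ?_
    (card_irredundantSubsets_le hM fun L => card_le_im_of_mem_irredundantSubsets hG)
  · exact_mod_cast card_pos.mpr ⟨∅, empty_mem_irredundantSubsets⟩
  · exact mul_nonpos_of_nonneg_of_nonpos (blockRate_nonneg M M) (by linarith)

end Graph

lemma two_inv_pow_mul_le_one (M : ℕ) : (2 : ℝ)⁻¹ ^ M * M ≤ 1 := by
  have hM : (M : ℝ) ≤ 2 ^ M := by exact_mod_cast Nat.lt_two_pow_self.le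
  calc (2 : ℝ)⁻¹ ^ M * M ≤ (2 : ℝ)⁻¹ ^ M * 2 ^ M := by gcongr
    _ = 1 := by rw [← mul_pow]; norm_num

lemma two_inv_pow_four_mul_le_blockRate_mul {M : ℕ} {ε : ℝ} (hε : 2 ≤ ε * M) :
    (2 : ℝ)⁻¹ ^ (4 * M) ≤ blockRate M M * (ε / 2) := by
  set u := (2 : ℝ)⁻¹ ^ M with hu
  have hM : (0 : ℝ) < M :=
    (Nat.cast_nonneg M).lt_of_ne' (right_ne_zero_of_mul (two_pos.trans_le hε).ne')
  have huM : u * M ≤ 1 := two_inv_pow_mul_le_one M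
  calc (2 : ℝ)⁻¹ ^ (4 * M) = u * (u * M) ^ 3 / (M * M) * (1 / M) := by
        rw [mul_comm, pow_mul, ← hu]
        field_simp
    _ ≤ u * 1 ^ 3 / (M * M) * (ε / 2) := by
        gcongr ?_ / _ * ?_
        · gcongr
        · rw [div_le_div_iff₀ hM two_pos]
          linarith
    _ = blockRate M M * (ε / 2) := by
        simp [blockRate, hu]

lemma exists_degree_threshold {a ε : ℝ} (ha : 2 ≤ a) (hε : 0 < ε) (hε' : ε ≤ 1) :
    ∃ M : ℕ, 2 ≤ M ∧ a ≤ ε * M ∧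
      (2 : ℝ) ^ (-(4 * (a + 1) / ε)) ≤ blockRate M M * (ε / 2) := by
  set M := ⌈a / ε⌉₊
  have haM : a ≤ ε * M := (div_le_iff₀' hε).mp (Nat.le_ceil _)
  have hMle : (M : ℝ) ≤ (a + 1) / ε := by
    have hceil : (M : ℝ) < a / ε + 1 := Nat.ceil_lt_add_one (by positivity)
    have hinv : 1 ≤ 1 / ε := (one_le_div hε).mpr hε'
    rw [add_div]
    linarith
  have hM₂ : 2 ≤ M := by
    have hM' : (2 : ℝ) ≤ M := by nlinarith [(Nat.cast_nonneg M : (0 : ℝ) ≤ M)]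
    exact_mod_cast hM'
  refine ⟨M, hM₂, haM, ?_⟩
  calc (2 : ℝ) ^ (-(4 * (a + 1) / ε)) ≤ 2 ^ (-((4 * M : ℕ) : ℝ)) := by
        apply rpow_le_rpow_of_exponent_le one_le_two
        push_cast
        rw [mul_div_assoc]
        linarith
    _ = (2 : ℝ)⁻¹ ^ (4 * M) := by rw [rpow_neg two_pos.le, rpow_natCast, inv_pow]
    _ ≤ blockRate M M * (ε / 2) := two_inv_pow_four_mul_le_blockRate_mul (ha.trans haM)

theorem stability_unbalanced_irr_general (K : ℝ) :
    ∃ C : ℝ, 0 < C ∧ ∀ ε : ℝ, 0 < ε →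
      ∀ (V : Type*) (G : SimpleGraph V) (X Y : Finset V),
        G.IsBipartiteWith X Y → (#Y : ℝ) ≤ K * #X → (im G : ℝ) < (1 - ε) * #X →
        logb 2 (irr G X) < (1 - (2 : ℝ) ^ (-(C / ε))) * #X := by
  set a := max 2 (8 * K)
  have ha : 2 ≤ a := le_max_left _ _
  refine ⟨4 * (a + 1), by linarith, fun ε hε V G X Y hG hY him => ?_⟩
  have hprod : 0 < (1 - ε) * #X := (Nat.cast_nonneg _).trans_lt him
  have hX : (0 : ℝ) < #X := (Nat.cast_nonneg _).lt_of_ne' (right_ne_zero_of_mul hprod.ne')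
  have hε' : ε ≤ 1 := by linarith [pos_of_mul_pos_left hprod hX.le]
  obtain ⟨M, hM, haM, hδ⟩ := exists_degree_threshold ha hε hε'
  have hrate : 0 < blockRate M M := by
    unfold blockRate
    positivity
  have hYcost : 4 / (M : ℝ) * #Y ≤ ε / 2 * #X := by
    have hK : 8 * K ≤ ε * M := (le_max_right _ _).trans haM
    calc 4 / (M : ℝ) * #Y ≤ 4 / M * (K * #X) := by gcongr
      _ = 8 * K / M * (#X / 2) := by ring
      _ ≤ ε * (#X / 2) := by
        gcongr
        exact (div_le_iff₀ (by positivity)).mpr hK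
      _ = ε / 2 * #X := by ring
  have hgap : im G + 4 / (M : ℝ) * #Y - #X < -(ε / 2 * #X) := by linarith
  calc logb 2 (irr G X) ≤ #X + blockRate M M * (im G + 4 / M * #Y - #X) :=
        logb_irr_le hG hM (by linarith [mul_pos (half_pos hε) hX])
    _ < #X + blockRate M M * -(ε / 2 * #X) := by gcongr
    _ = (1 - blockRate M M * (ε / 2)) * #X := by ring
    _ ≤ (1 - (2 : ℝ) ^ (-(4 * (a + 1) / ε))) * #X := by gcongr

theorem stability_unbalanced_irr :
    ∃ C : ℝ, 0 < C ∧ ∀ ε : ℝ, 0 < ε → ∃ δ : ℝ, 0 < δ ∧ (2 : ℝ) ^ (-(C / ε)) ≤ δ ∧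
      ∀ (V : Type) [Fintype V] (G : SimpleGraph V) (X Y : Finset V) (n : ℕ),
        Disjoint X Y → (∀ v : V, v ∈ X ∨ v ∈ Y) →
        (∀ a b : V, G.Adj a b → (a ∈ X ∧ b ∈ Y) ∨ (a ∈ Y ∧ b ∈ X)) →
        X.card = n → Y.card = 2 * n →
        (im G : ℝ) < (1 - ε) * (n : ℝ) →
        Real.logb 2 (irr G ↑X) < (1 - δ) * (n : ℝ) := by
  obtain ⟨C, hC, hbound⟩ := stability_unbalanced_irr_general 2
  refine ⟨C, hC, fun ε hε => ⟨2 ^ (-(C / ε)), by positivity, le_rfl, ?_⟩⟩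
  rintro V _ G X Y n hXY - hadj rfl hY him
  exact hbound ε hε V G X Y ⟨disjoint_coe.mpr hXY, fun v w => hadj v w⟩ (by simp [hY]) him
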